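/- For every even natural number n with n ≠ 2 (i.e., n = 0 or n even with n ≥ 4), the function μ_n is a polynomial of degree exactly n: the coefficient c_{2k}(n) vanishes whenever 2k > n, the coefficient c_n(n) is nonzero, and hence there exists a polynomial p ∈ ℂ[X] of degree n with μ_n(z) = p(z) for all z ∈ ℂ. -/

import Mathlib

/-- Even coefficients c_{2k}(n) of the generalized power series. -/
noncomputable def ceven (n k : ℕ) : ℂ :=
  if k = 0 then 1
  else if k = 1 then -(n : ℂ)
  else (-1) ^ k * 2 ^ k * (n : ℂ) * ((n : ℂ) - ((2 * (k : ℂ) - 1) ^ 2 + 1)) *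
    (∏ j ∈ Finset.Icc 1 (k - 2), ((n : ℂ) - 2 * (1 + (j : ℂ)))) /
      (Nat.factorial (2 * k) : ℂ)

/-- Odd coefficients: `codd n k` is c_{2k-1}(n), for k ≥ 1. -/
noncomputable def codd (n k : ℕ) : ℂ :=
  if k ≤ 1 then 1
  else (-1) ^ (k + 1) * 2 ^ (k - 1) * ((n : ℂ) - ((2 * ((k : ℂ) - 1)) ^ 2 + 1)) *
    (∏ j ∈ Finset.Icc 1 (k - 2), ((n : ℂ) - (2 * (1 + (j : ℂ)) - 1))) /
      (Nat.factorial (2 * k - 1) : ℂ)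

/-- μₙ(z) = Σ_{k≥0} c_{2k}(n)·z^{2k}. -/
noncomputable def muF (n : ℕ) (z : ℂ) : ℂ := ∑' k : ℕ, ceven n k * z ^ (2 * k)

/-- νₙ(z) = Σ_{k≥1} c_{2k-1}(n)·z^{2k-1}. -/
noncomputable def nuF (n : ℕ) (z : ℂ) : ℂ := ∑' k : ℕ, codd n (k + 1) * z ^ (2 * k + 1)

/-- βₙ = μₙ + νₙ. -/
noncomputable def betaF (n : ℕ) (z : ℂ) : ℂ := muF n z + nuF n z

/-!
For even `n ≥ 4` the factor of index `j = n / 2 - 1` in the product defining `c_{2k}(n)` is zero,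
and it occurs exactly when `2 * k > n`. For `2 * k = n` every factor of the product is positive,
and the quadratic factor `(n - 1) - (n - 1) ^ 2` vanishes only at `n = 1` and `n = 2`.
-/

section TruncatedSeries

open Polynomial

variable {R : Type*} [Semiring R] {a : ℕ → R} {e : ℕ → ℕ} {m : ℕ}

theorem degree_sum_range_succ_C_mul_X_pow (he : StrictMono e) (ha : a m ≠ 0) :
    (∑ k ∈ Finset.range (m + 1), C (a k) * X ^ e k).degree = (e m : WithBot ℕ) := by
  have lower_terms : (∑ k ∈ Finset.range m, C (a k) * X ^ e k).degree < (e m : WithBot ℕ) := by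
    refine (degree_sum_le _ _).trans_lt ((Finset.sup_lt_iff (WithBot.bot_lt_coe _)).2 ?_)
    intro k hk
    exact (degree_C_mul_X_pow_le _ _).trans_lt
      (Nat.cast_lt.2 (he (Finset.mem_range.1 hk)))
  have top_term : (C (a m) * X ^ e m).degree = (e m : WithBot ℕ) := degree_C_mul_X_pow _ ha
  rw [Finset.sum_range_succ, degree_add_eq_right_of_degree_lt (by rwa [top_term]), top_term]

theorem tsum_mul_pow_eq_eval_sum_range_succ [TopologicalSpace R]
    (ha : ∀ k, m < k → a k = 0) (z : R) :
    ∑' k, a k * z ^ e k = (∑ k ∈ Finset.range (m + 1), C (a k) * X ^ e k).eval z := by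
  have tail_zero : ∀ k ∉ Finset.range (m + 1), a k * z ^ e k = 0 := by
    intro k hk
    rw [ha k (by simpa [Nat.lt_succ_iff] using hk), zero_mul]
  simp only [tsum_eq_sum tail_zero, eval_finsetSum, eval_C_mul, eval_X_pow]

end TruncatedSeries

theorem ceven_of_two_le (n : ℕ) {k : ℕ} (hk : 2 ≤ k) :
    ceven n k = (-1) ^ k * 2 ^ k * (n : ℂ) * ((n : ℂ) - ((2 * (k : ℂ) - 1) ^ 2 + 1)) *
      (∏ j ∈ Finset.Icc 1 (k - 2), ((n : ℂ) - 2 * (1 + (j : ℂ)))) /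
        (Nat.factorial (2 * k) : ℂ) := by
  rw [ceven, if_neg (by omega), if_neg (by omega)]

theorem ceven_eq_zero_iff_of_two_le {n k : ℕ} (hk : 2 ≤ k) :
    ceven n k = 0 ↔
      n = 0 ∨ n = (2 * k - 1) ^ 2 + 1 ∨ ∃ j ∈ Finset.Icc 1 (k - 2), n = 2 * (1 + j) := by
  have quadratic_factor :
      (n : ℂ) - ((2 * (k : ℂ) - 1) ^ 2 + 1) = 0 ↔ n = (2 * k - 1) ^ 2 + 1 := by
    rw [sub_eq_zero, ← Nat.cast_inj (R := ℂ)]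
    push_cast [show 1 ≤ 2 * k by omega]
    rfl
  have linear_factor (j : ℕ) : (n : ℂ) - 2 * (1 + (j : ℂ)) = 0 ↔ n = 2 * (1 + j) := by
    rw [sub_eq_zero]
    norm_cast
  have sign_and_power_ne_zero : (-1 : ℂ) ^ k * 2 ^ k ≠ 0 := by simp
  have factorial_ne_zero : ((2 * k).factorial : ℂ) ≠ 0 :=
    Nat.cast_ne_zero.2 (Nat.factorial_ne_zero _)
  simp only [ceven_of_two_le n hk, div_eq_zero_iff, mul_eq_zero (b := ∏ _ ∈ _, _),
    mul_eq_zero (b := (n : ℂ) - _), mul_eq_zero (b := (n : ℂ)), Finset.prod_eq_zero_iff,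
    quadratic_factor, linear_factor, sign_and_power_ne_zero, factorial_ne_zero, Nat.cast_eq_zero,
    false_or, or_false, or_assoc]

theorem ceven_zero_left {k : ℕ} (hk : k ≠ 0) : ceven 0 k = 0 := by
  simp [ceven, hk]

theorem ceven_two_mul_eq_zero_of_lt {m k : ℕ} (hm : m ≠ 1) (hmk : m < k) :
    ceven (2 * m) k = 0 := by
  rcases Nat.eq_zero_or_pos m with rfl | hm_pos
  · exact ceven_zero_left hmk.ne'
  · refine (ceven_eq_zero_iff_of_two_le (by omega)).2 (.inr (.inr ⟨m - 1, ?_, by omega⟩))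
    exact Finset.mem_Icc.2 (by omega)

theorem ceven_two_mul_self_ne_zero {m : ℕ} (hm : m ≠ 1) : ceven (2 * m) m ≠ 0 := by
  rcases Nat.eq_zero_or_pos m with rfl | hm_pos
  · simp [ceven]
  · rw [Ne, ceven_eq_zero_iff_of_two_le (by omega)]
    rintro (two_m_zero | quadratic_zero | ⟨j, hj, linear_zero⟩)
    · omega
    · have : 2 * m - 1 < (2 * m - 1) ^ 2 := lt_self_pow₀ (by omega) one_lt_two
      omega
    · have := Finset.mem_Icc.1 hj
      omega

theorem stmt10 (n : ℕ) (hev : Even n) (hn : n ≠ 2) :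
    (∀ k : ℕ, 2 * k > n → ceven n k = 0) ∧
    ceven n (n / 2) ≠ 0 ∧
    ∃ p : Polynomial ℂ, p.degree = n ∧ ∀ z : ℂ, muF n z = p.eval z := by
  obtain ⟨m, rfl⟩ := hev.two_dvd
  have hm : m ≠ 1 := by omega
  have high_coeff (k : ℕ) (hk : m < k) : ceven (2 * m) k = 0 := ceven_two_mul_eq_zero_of_lt hm hk
  have top_coeff : ceven (2 * m) m ≠ 0 := ceven_two_mul_self_ne_zero hm
  refine ⟨fun k hk => high_coeff k (by omega), ?_, _,
    degree_sum_range_succ_C_mul_X_pow (strictMono_mul_left_of_pos two_pos) top_coeff,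
    tsum_mul_pow_eq_eval_sum_range_succ high_coeff⟩
  rwa [Nat.mul_div_cancel_left m two_pos]
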